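/- arXiv:2104.15083 — 2 statements merged into one kernel-verified Lean document; each statement's English description precedes it below -/
import Mathlib

section
/- (Theorem 1, existence form) Let S be a sample over a nonempty set P of propositional variables, Ω a weight function on the traces of S with Σ_{(u,b)∈S} Ω(u) = 1 and Ω(u) > 0 for all traces, and κ a real number with 0 ≤ κ ≤ 1. Then there exists an LTLf formula φ such that wl(S,φ,Ω) ≤ κ and |φ| ≤ |ψ| for every LTLf formula ψ with wl(S,ψ,Ω) ≤ κ; that is, a size-minimal formula achieving weighted loss at most κ exists. -/
/-- Syntax of LTLf formulas over propositional variables `P`: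
`φ ::= p | ¬φ | φ ∨ φ | X φ | φ U φ`. -/
inductive LTL (P : Type) : Type
  | atom : P → LTL P
  | neg  : LTL P → LTL P
  | disj : LTL P → LTL P → LTL P
  | next : LTL P → LTL P
  | untl : LTL P → LTL P → LTL P

open Classical in
/-- The valuation `V(φ, u, i) ∈ {0,1}` of an LTLf formula on a finite trace
`u : List (Set P)` at position `i`. -/
noncomputable def Val {P : Type} : LTL P → List (Set P) → ℕ → ℕ
  | .atom p, u, i => if p ∈ u.getD i ∅ then 1 else 0
  | .neg φ, u, i => 1 - Val φ u i
  | .disj φ ψ, u, i => max (Val φ u i) (Val ψ u i)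
  | .next φ, u, i => if i + 1 < u.length ∧ Val φ u (i + 1) = 1 then 1 else 0
  | .untl φ ψ, u, i =>
      if ∃ j, i ≤ j ∧ j < u.length ∧ Val ψ u j = 1 ∧
          ∀ k, i ≤ k → k < j → Val φ u k = 1 then 1 else 0

/-- The weighted loss `wl(S,φ,Ω) = Σ_{(u,b)∈S} Ω(u)·|V(u⊨φ) − b|`. -/
noncomputable def wloss {P : Type} (S : Finset (List (Set P) × ℕ)) (φ : LTL P)
    (Ω : List (Set P) → ℝ) : ℝ :=
  ∑ x ∈ S, Ω x.1 * |(Val φ x.1 0 : ℝ) - (x.2 : ℝ)|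

/-- The set of subformulas of an LTLf formula. -/
def subf {P : Type} : LTL P → Set (LTL P)
  | .atom p => {.atom p}
  | .neg φ => insert (.neg φ) (subf φ)
  | .disj φ ψ => insert (.disj φ ψ) (subf φ ∪ subf ψ)
  | .next φ => insert (.next φ) (subf φ)
  | .untl φ ψ => insert (.untl φ ψ) (subf φ ∪ subf ψ)

/-- The size `|φ|` of an LTLf formula: the number of its distinct subformulas. -/
noncomputable def size {P : Type} (φ : LTL P) : ℕ := (subf φ).ncard

/-!
The formula `φ U φ` holds exactly at the positions of the trace at which `φ` holds, so `Xⁿ (φ U φ)`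
says that position `n` exists and satisfies `φ`. Such formulas recover the length and the letters
of a trace, so distinct traces are told apart by some formula. The sets of traces defined by
formulas form an algebra of sets, and an algebra of sets that separates points cuts out every
subset of a finite set. Hence some formula fits the sample without error, and among the formulas
of loss at most `κ` one has least size because sizes are natural numbers.
-/

theorem exists_mem_separating_of_isSetAlgebra {α : Type*} {𝒜 : Set (Set α)}
    (h𝒜 : MeasureTheory.IsSetAlgebra 𝒜) {x y : α} (hxy : ¬∀ D ∈ 𝒜, x ∈ D ↔ y ∈ D) :
    ∃ D ∈ 𝒜, x ∈ D ∧ y ∉ D := by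
  by_contra! h
  exact hxy fun D hD => ⟨h D hD, not_imp_not.1 (h Dᶜ (h𝒜.compl_mem hD))⟩

theorem exists_mem_forall_mem_iff_of_isSetAlgebra {α : Type*} {𝒜 : Set (Set α)}
    (h𝒜 : MeasureTheory.IsSetAlgebra 𝒜) (hinj : ∀ x y, (∀ D ∈ 𝒜, x ∈ D ↔ y ∈ D) → x = y)
    (T : Finset α) (s : Set α) : ∃ D ∈ 𝒜, ∀ x ∈ T, x ∈ D ↔ x ∈ s := by
  classical
  choose! D hD hmem hnotMem using
    fun x y (hxy : x ≠ y) => exists_mem_separating_of_isSetAlgebra h𝒜 (mt (hinj x y) hxy)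
  have hne : ∀ x ∈ T.filter (· ∈ s), ∀ y ∈ T.filter (· ∉ s), x ≠ y := by
    grind
  refine ⟨⋃ x ∈ T.filter (· ∈ s), ⋂ y ∈ T.filter (· ∉ s), D x y,
    h𝒜.biUnion_mem _ fun x hx => h𝒜.biInter_mem _ fun y hy => hD x y (hne x hx y hy),
    fun z hz => ?_⟩
  simp only [Set.mem_iUnion, Set.mem_iInter, exists_prop]
  constructor
  · rintro ⟨x, hx, hzD⟩
    by_contra hzs
    have hz' : z ∈ T.filter (· ∉ s) := Finset.mem_filter.2 ⟨hz, hzs⟩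
    exact hnotMem x z (hne x hx z hz') (hzD z hz')
  · intro hzs
    have hz' : z ∈ T.filter (· ∈ s) := Finset.mem_filter.2 ⟨hz, hzs⟩
    exact ⟨z, hz', fun y hy => hmem z y (hne z hz' y hy)⟩

namespace LTL

variable {P : Type}

theorem val_le_one (φ : LTL P) (u : List (Set P)) (i : ℕ) : Val φ u i ≤ 1 := by
  induction φ generalizing i with
  | atom p => simp only [Val]; split_ifs <;> simp
  | neg φ => simp only [Val]; omega
  | disj φ ψ ihφ ihψ => exact max_le (ihφ i) (ihψ i)
  | next φ => simp only [Val]; split_ifs <;> simp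
  | untl φ ψ => simp only [Val]; split_ifs <;> simp

theorem val_neg_eq_one_iff {φ : LTL P} {u : List (Set P)} {i : ℕ} :
    Val (neg φ) u i = 1 ↔ Val φ u i ≠ 1 := by
  have := val_le_one φ u i
  simp only [Val]
  omega

theorem val_disj_eq_one_iff {φ ψ : LTL P} {u : List (Set P)} {i : ℕ} :
    Val (disj φ ψ) u i = 1 ↔ Val φ u i = 1 ∨ Val ψ u i = 1 := by
  have := val_le_one φ u i
  have := val_le_one ψ u i
  simp only [Val]
  omega

theorem val_next_iterate_eq_one_iff {φ : LTL P} {u : List (Set P)} {n i : ℕ}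
    (hφ : ∀ j, Val φ u j = 1 → j < u.length) :
    Val (next^[n] φ) u i = 1 ↔ Val φ u (i + n) = 1 := by
  induction n generalizing i with
  | zero => rfl
  | succ n ih =>
    have hlt : Val φ u (i + (n + 1)) = 1 → i + 1 < u.length := fun h => by
      have := hφ _ h
      omega
    simpa [Function.iterate_succ_apply', Val, ih, add_assoc, add_comm 1 n] using hlt

theorem val_untl_self_eq_one_iff {φ : LTL P} {u : List (Set P)} {i : ℕ} :
    Val (untl φ φ) u i = 1 ↔ i < u.length ∧ Val φ u i = 1 := by
  simp only [Val, ite_eq_left_iff, zero_ne_one, imp_false, not_not]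
  constructor
  · rintro ⟨j, hij, hj, hφj, hφ⟩
    obtain rfl | hlt := hij.eq_or_lt
    · exact ⟨hj, hφj⟩
    · exact ⟨hlt.trans hj, hφ i le_rfl hlt⟩
  · rintro ⟨hi, hφ⟩
    exact ⟨i, le_rfl, hi, hφ, fun k hik hki => absurd hik hki.not_ge⟩

theorem exists_forall_val_eq_one [Nonempty P] : ∃ φ : LTL P, ∀ u i, Val φ u i = 1 := by
  obtain ⟨p⟩ := ‹Nonempty P›
  exact ⟨disj (atom p) (neg (atom p)), fun u i =>
    val_disj_eq_one_iff.2 <| (em _).imp_right val_neg_eq_one_iff.2⟩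

/-- The language of a formula: the set of traces satisfying it at their first position. The empty
list, which is not a trace of the paper, is admitted as well. -/
def language (φ : LTL P) : Set (List (Set P)) := {u | Val φ u 0 = 1}

theorem mem_language {φ : LTL P} {u : List (Set P)} : u ∈ φ.language ↔ Val φ u 0 = 1 := Iff.rfl

theorem language_neg (φ : LTL P) : (neg φ).language = φ.languageᶜ :=
  Set.ext fun _ => val_neg_eq_one_iff

theorem language_disj (φ ψ : LTL P) : (disj φ ψ).language = φ.language ∪ ψ.language :=
  Set.ext fun _ => val_disj_eq_one_iff

theorem isSetAlgebra_range_language [Nonempty P] :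
    MeasureTheory.IsSetAlgebra (Set.range (language (P := P))) where
  empty_mem := by
    obtain ⟨φ, hφ⟩ := exists_forall_val_eq_one (P := P)
    exact ⟨neg φ, Set.eq_empty_of_forall_notMem fun u hu => val_neg_eq_one_iff.1 hu (hφ u 0)⟩
  compl_mem := by
    rintro _ ⟨φ, rfl⟩
    exact ⟨neg φ, language_neg φ⟩
  union_mem := by
    rintro _ _ ⟨φ, rfl⟩ ⟨ψ, rfl⟩
    exact ⟨disj φ ψ, language_disj φ ψ⟩

/-- The formula `Xⁿ (φ U φ)`, expressing that position `n` exists and satisfies `φ`. The inner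
until makes this correct for `n = 0` on the empty list too. -/
def atPosition (n : ℕ) (φ : LTL P) : LTL P := next^[n] (untl φ φ)

theorem mem_language_atPosition {n : ℕ} {φ : LTL P} {u : List (Set P)} :
    u ∈ (atPosition n φ).language ↔ n < u.length ∧ Val φ u n = 1 := by
  rw [mem_language, atPosition,
    val_next_iterate_eq_one_iff fun j hj => (val_untl_self_eq_one_iff.1 hj).1, zero_add,
    val_untl_self_eq_one_iff]

theorem eq_of_forall_mem_language_iff [Nonempty P] {u v : List (Set P)}
    (h : ∀ φ : LTL P, u ∈ φ.language ↔ v ∈ φ.language) : u = v := by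
  have hpos (n : ℕ) (φ : LTL P) :
      n < u.length ∧ Val φ u n = 1 ↔ n < v.length ∧ Val φ v n = 1 := by
    simpa only [mem_language_atPosition] using h (atPosition n φ)
  have hlen : u.length = v.length := by
    obtain ⟨φ, hφ⟩ := exists_forall_val_eq_one (P := P)
    exact eq_of_forall_lt_iff fun n => by simpa only [hφ, and_true] using hpos n φ
  refine List.ext_getElem hlen fun n hu hv => Set.ext fun p => ?_
  simpa [Val, hu, hv] using hpos n (atom p)

theorem exists_forall_val_eq_snd [Nonempty P] (S : Finset (List (Set P) × ℕ))
    (hlab : ∀ x ∈ S, x.2 = 0 ∨ x.2 = 1)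
    (hfun : ∀ u b₁ b₂, (u, b₁) ∈ S → (u, b₂) ∈ S → b₁ = b₂) :
    ∃ φ : LTL P, ∀ x ∈ S, Val φ x.1 0 = x.2 := by
  classical
  obtain ⟨_, ⟨φ, rfl⟩, hφ⟩ := exists_mem_forall_mem_iff_of_isSetAlgebra
    isSetAlgebra_range_language
    (fun u v h => eq_of_forall_mem_language_iff fun φ => h _ ⟨φ, rfl⟩)
    (S.image Prod.fst) {u : List (Set P) | (u, 1) ∈ S}
  refine ⟨φ, fun ⟨u, b⟩ hub => ?_⟩
  have hu : Val φ u 0 = 1 ↔ (u, 1) ∈ S := hφ u (Finset.mem_image_of_mem Prod.fst hub)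
  obtain rfl | rfl : b = 0 ∨ b = 1 := hlab _ hub
  · have hne : Val φ u 0 ≠ 1 := fun h => zero_ne_one (hfun u 0 1 hub (hu.1 h))
    exact Nat.lt_one_iff.1 ((val_le_one φ u 0).lt_of_ne hne)
  · exact hu.2 hub

theorem wloss_eq_zero_of_forall_val_eq {S : Finset (List (Set P) × ℕ)} {φ : LTL P}
    (hφ : ∀ x ∈ S, Val φ x.1 0 = x.2) (Ω : List (Set P) → ℝ) : wloss S φ Ω = 0 :=
  Finset.sum_eq_zero fun x hx => by rw [hφ x hx, sub_self, abs_zero, mul_zero]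

end LTL

theorem exists_minimal_formula_general {P : Type} [Nonempty P]
    (S : Finset (List (Set P) × ℕ))
    (hlab : ∀ x ∈ S, x.2 = 0 ∨ x.2 = 1)
    (hfun : ∀ u b₁ b₂, (u, b₁) ∈ S → (u, b₂) ∈ S → b₁ = b₂)
    (Ω : List (Set P) → ℝ) (κ : ℝ) (hκ0 : 0 ≤ κ) :
    ∃ φ : LTL P, wloss S φ Ω ≤ κ ∧
      ∀ ψ : LTL P, wloss S ψ Ω ≤ κ → size φ ≤ size ψ := by
  obtain ⟨φ, hφ⟩ := LTL.exists_forall_val_eq_snd S hlab hfun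
  have hne : {ψ : LTL P | wloss S ψ Ω ≤ κ}.Nonempty :=
    ⟨φ, (LTL.wloss_eq_zero_of_forall_val_eq hφ Ω).trans_le hκ0⟩
  exact ⟨Function.argminOn size _ hne, Function.argminOn_mem size _ hne,
    fun _ hψ => Function.argminOn_le size _ hψ⟩

/-- (Theorem 1, existence form.) For any sample over a nonempty `P`, any
strictly positive weight function summing to `1`, and any `0 ≤ κ ≤ 1`, there
exists a size-minimal LTLf formula with weighted loss at most `κ`. -/
theorem exists_minimal_formula {P : Type} [Nonempty P]
    (S : Finset (List (Set P) × ℕ)) (hS : S.Nonempty)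
    (hlab : ∀ x ∈ S, x.2 = 0 ∨ x.2 = 1)
    (hfun : ∀ u b₁ b₂, (u, b₁) ∈ S → (u, b₂) ∈ S → b₁ = b₂)
    (hne : ∀ x ∈ S, x.1 ≠ [])
    (Ω : List (Set P) → ℝ) (hΩpos : ∀ x ∈ S, 0 < Ω x.1)
    (hΩ1 : ∑ x ∈ S, Ω x.1 = 1)
    (κ : ℝ) (hκ0 : 0 ≤ κ) (hκ1 : κ ≤ 1) :
    ∃ φ : LTL P, wloss S φ Ω ≤ κ ∧
      ∀ ψ : LTL P, wloss S ψ Ω ≤ κ → size φ ≤ size ψ :=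
  exists_minimal_formula_general S hlab hfun Ω κ hκ0
end

section
/- (Theorem 2, induction step) Let S be a sample, φ an LTLf formula, and let S₁ = {(u,b) ∈ S : V(u ⊨ φ) = 1} and S₂ = {(u,b) ∈ S : V(u ⊨ φ) = 0}, and assume S₁ and S₂ are both nonempty. If ψ₁ and ψ₂ are LTLf formulas with l(S₁, ψ₁) ≤ κ and l(S₂, ψ₂) ≤ κ for a real number κ ≥ 0, then l(S, (φ ∧ ψ₁) ∨ (¬φ ∧ ψ₂)) ≤ κ. -/
/-- Derived conjunction `φ ∧ ψ := ¬(¬φ ∨ ¬ψ)`. -/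
def LTL.conj {P : Type} (φ ψ : LTL P) : LTL P := .neg (.disj (.neg φ) (.neg ψ))

/-- The loss `l(S,φ) = (1/|S|) · Σ_{(u,b)∈S} |V(u⊨φ) − b|`. -/
noncomputable def loss {P : Type} (S : Finset (List (Set P) × ℕ)) (φ : LTL P) : ℝ :=
  (∑ x ∈ S, |(Val φ x.1 0 : ℝ) - (x.2 : ℝ)|) / (S.card : ℝ)

/-!
The formula `(φ ∧ ψ₁) ∨ (¬φ ∧ ψ₂)` is a conditional: it agrees with `ψ₁` where `φ` holds and with
`ψ₂` elsewhere. Hence its loss on `S` is the average of the losses of `ψ₁` on `S₁` and of `ψ₂` on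
`S₂`, weighted by `|S₁| / |S|` and `|S₂| / |S|`, and so is at most the larger of the two.
-/

section Valuation

variable {P : Type}

theorem val_le_one (φ : LTL P) (u : List (Set P)) (i : ℕ) : Val φ u i ≤ 1 := by
  induction φ generalizing i with
  | atom p => simp only [Val]; split_ifs <;> simp
  | neg φ _ => exact Nat.sub_le 1 _
  | disj φ ψ ihφ ihψ => exact max_le (ihφ i) (ihψ i)
  | next φ _ => simp only [Val]; split_ifs <;> simp
  | untl φ ψ _ _ => simp only [Val]; split_ifs <;> simp

theorem val_ne_one_iff {φ : LTL P} {u : List (Set P)} {i : ℕ} :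
    Val φ u i ≠ 1 ↔ Val φ u i = 0 := by
  have := val_le_one φ u i
  omega

theorem val_conj (φ ψ : LTL P) (u : List (Set P)) (i : ℕ) :
    Val (φ.conj ψ) u i = min (Val φ u i) (Val ψ u i) := by
  have hφ := val_le_one φ u i
  have hψ := val_le_one ψ u i
  simp only [LTL.conj, Val]
  omega

/-- The conditional `if φ then ψ₁ else ψ₂`, encoded as `(φ ∧ ψ₁) ∨ (¬φ ∧ ψ₂)`; it glues
formulas learned on the two parts of a sample split by `φ`. -/
def LTL.ite (φ ψ₁ ψ₂ : LTL P) : LTL P := .disj (.conj φ ψ₁) (.conj (.neg φ) ψ₂)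

theorem val_ite (φ ψ₁ ψ₂ : LTL P) (u : List (Set P)) (i : ℕ) :
    Val (φ.ite ψ₁ ψ₂) u i = if Val φ u i = 1 then Val ψ₁ u i else Val ψ₂ u i := by
  have hψ₁ := val_le_one ψ₁ u i
  have hψ₂ := val_le_one ψ₂ u i
  simp only [LTL.ite, Val, val_conj]
  split_ifs with hφ
  · simp [hφ, hψ₁]
  · simp [val_ne_one_iff.mp hφ, hψ₂]

end Valuation

section Loss

open scoped Finset

variable {P : Type} (S : Finset (List (Set P) × ℕ))

theorem card_mul_loss (φ : LTL P) :
    #S * loss S φ = ∑ x ∈ S, |(Val φ x.1 0 : ℝ) - (x.2 : ℝ)| := by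
  obtain rfl | hS := S.eq_empty_or_nonempty
  · simp
  · exact mul_div_cancel₀ _ (Nat.cast_ne_zero.mpr hS.card_ne_zero)

theorem card_mul_loss_eq_filter_add_filter_not (φ : LTL P)
    (p : List (Set P) × ℕ → Prop) [DecidablePred p] :
    #S * loss S φ =
      #{x ∈ S | p x} * loss {x ∈ S | p x} φ +
        #{x ∈ S | ¬p x} * loss {x ∈ S | ¬p x} φ := by
  simp only [card_mul_loss, Finset.sum_filter_add_sum_filter_not]

variable {S} in
theorem loss_congr {φ ψ : LTL P} (h : ∀ x ∈ S, Val φ x.1 0 = Val ψ x.1 0) :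
    loss S φ = loss S ψ := by
  unfold loss
  congr 1
  exact Finset.sum_congr rfl fun x hx => by rw [h x hx]

theorem card_mul_loss_ite (φ ψ₁ ψ₂ : LTL P) :
    #S * loss S (φ.ite ψ₁ ψ₂) =
      #{x ∈ S | Val φ x.1 0 = 1} * loss {x ∈ S | Val φ x.1 0 = 1} ψ₁ +
      #{x ∈ S | Val φ x.1 0 = 0} * loss {x ∈ S | Val φ x.1 0 = 0} ψ₂ := by
  have eq_on_true : loss {x ∈ S | Val φ x.1 0 = 1} (φ.ite ψ₁ ψ₂) =
      loss {x ∈ S | Val φ x.1 0 = 1} ψ₁ :=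
    loss_congr fun x hx => by rw [val_ite, if_pos (Finset.mem_filter.mp hx).2]
  have eq_on_false : loss {x ∈ S | Val φ x.1 0 = 0} (φ.ite ψ₁ ψ₂) =
      loss {x ∈ S | Val φ x.1 0 = 0} ψ₂ :=
    loss_congr fun x hx => by
      rw [val_ite, if_neg (val_ne_one_iff.mpr (Finset.mem_filter.mp hx).2)]
  rw [card_mul_loss_eq_filter_add_filter_not S _ (fun x => Val φ x.1 0 = 1)]
  simp only [← ne_eq, val_ne_one_iff, eq_on_true, eq_on_false]

theorem card_filter_val_eq_one_add_card_filter_val_eq_zero (φ : LTL P) :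
    #{x ∈ S | Val φ x.1 0 = 1} + #{x ∈ S | Val φ x.1 0 = 0} = #S := by
  simpa only [← ne_eq, val_ne_one_iff] using
    S.card_filter_add_card_filter_not (fun x => Val φ x.1 0 = 1)

variable {S} in
theorem loss_split_le_general (hS : S.Nonempty) {φ ψ₁ ψ₂ : LTL P} {κ : ℝ}
    (h₁ : loss {x ∈ S | Val φ x.1 0 = 1} ψ₁ ≤ κ)
    (h₂ : loss {x ∈ S | Val φ x.1 0 = 0} ψ₂ ≤ κ) :
    loss S (φ.ite ψ₁ ψ₂) ≤ κ := by
  have card_pos : (0 : ℝ) < #S := Nat.cast_pos.mpr hS.card_pos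
  refine le_of_mul_le_mul_left ?_ card_pos
  calc #S * loss S (φ.ite ψ₁ ψ₂)
    _ = #{x ∈ S | Val φ x.1 0 = 1} * loss {x ∈ S | Val φ x.1 0 = 1} ψ₁ +
        #{x ∈ S | Val φ x.1 0 = 0} * loss {x ∈ S | Val φ x.1 0 = 0} ψ₂ :=
      card_mul_loss_ite S φ ψ₁ ψ₂
    _ ≤ #{x ∈ S | Val φ x.1 0 = 1} * κ +
        #{x ∈ S | Val φ x.1 0 = 0} * κ := by gcongr
    _ = #S * κ := by
      rw [← add_mul, ← Nat.cast_add, card_filter_val_eq_one_add_card_filter_val_eq_zero]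

end Loss

/-- (Theorem 2, induction step.) If `S₁` and `S₂` are the nonempty subsamples of
`S` on which `φ` evaluates to `1` and `0` respectively, and `ψ₁, ψ₂` achieve
loss at most `κ ≥ 0` on `S₁` and `S₂`, then `(φ ∧ ψ₁) ∨ (¬φ ∧ ψ₂)` achieves
loss at most `κ` on `S`. -/
theorem loss_split_le {P : Type}
    (S : Finset (List (Set P) × ℕ)) (hS : S.Nonempty)
    (hlab : ∀ x ∈ S, x.2 = 0 ∨ x.2 = 1)
    (hfun : ∀ u b₁ b₂, (u, b₁) ∈ S → (u, b₂) ∈ S → b₁ = b₂)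
    (φ ψ₁ ψ₂ : LTL P) (κ : ℝ) (hκ : 0 ≤ κ)
    (h1 : (S.filter (fun x => Val φ x.1 0 = 1)).Nonempty)
    (h2 : (S.filter (fun x => Val φ x.1 0 = 0)).Nonempty)
    (hl1 : loss (S.filter (fun x => Val φ x.1 0 = 1)) ψ₁ ≤ κ)
    (hl2 : loss (S.filter (fun x => Val φ x.1 0 = 0)) ψ₂ ≤ κ) :
    loss S (LTL.disj (LTL.conj φ ψ₁) (LTL.conj (LTL.neg φ) ψ₂)) ≤ κ :=
  loss_split_le_general hS hl1 hl2
end
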